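/- Let 0 < β < 4. Then there exists a constant C > 0 (depending only on β) such that for every smooth function u : ℝ⁴ → ℝ with ∫_{ℝ⁴}(|Δu|² + |∇u|² + u²) dx < ∞, one has ∫_{ℝ⁴} u²/|x|^β dx ≤ C ∫_{ℝ⁴}(|Δu|² + |∇u|² + u²) dx. -/

import Mathlib

open MeasureTheory Real Filter Topology ENNReal

noncomputable section

/-- Four-dimensional Euclidean space with Lebesgue measure. -/
abbrev R4 : Type := EuclideanSpace ℝ (Fin 4)

/-- The Laplacian of `u : ℝ⁴ → ℝ`, as the sum of the pure second derivatives
along the coordinate directions. -/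
noncomputable def lapl (u : R4 → ℝ) (x : R4) : ℝ :=
  ∑ i : Fin 4, iteratedFDeriv ℝ 2 u x ![EuclideanSpace.single i 1, EuclideanSpace.single i 1]

/-! The singularity of `|x|^(-β)` only matters near the origin: away from the ball of radius `1/2` the
weight is at most `2^β`. Near the origin `u` is replaced by `v = φ u` with a smooth cutoff `φ`
supported in the unit ball, and the exponent is raised to some `γ ∈ [2, 4)`.

For such `v`, Hardy's inequality (`hardy`) bounds `∫ v² |x|^(-γ)` by a multiple of
`∫ |∇v|² |x|^(2 - γ)`, and a second application, to each `∂ᵢv`, by a multiple of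
`∫ |D²v|² |x|^(4 - γ)` (`hardy_twice`). The last weight is bounded on the unit ball, and
`∫ |D²v|² = ∫ (Δv)²` by two integrations by parts (`int_hess`). The weights are regularised to
`(|x|² + ε)ˢ`, so that only smooth compactly supported functions are integrated by parts; the limit
`ε → 0` is Fatou's lemma (`hardy_limit`). Finally `(Δv)²` is pointwise dominated by
`(Δu)² + |∇u|² + u²` through the product rule (`lapl_cutoff`).
-/

/-! ### Partial derivatives and integration by parts -/

/-- The partial derivative of `f` in the `i`-th coordinate direction. -/
def pd (i : Fin 4) (f : R4 → ℝ) (x : R4) : ℝ := fderiv ℝ f x (EuclideanSpace.single i 1)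

lemma pd_smooth {f : R4 → ℝ} (hf : ContDiff ℝ (⊤ : ℕ∞) f) (i : Fin 4) :
    ContDiff ℝ (⊤ : ℕ∞) (pd i f) := by
  unfold pd
  exact (hf.fderiv_right (m := (⊤ : ℕ∞)) (by simp)).clm_apply contDiff_const

lemma pd_supp {f : R4 → ℝ} (hf : HasCompactSupport f) (i : Fin 4) :
    HasCompactSupport (pd i f) :=
  hf.fderiv_apply ℝ _

lemma pd_tsupport (f : R4 → ℝ) (i : Fin 4) : tsupport (pd i f) ⊆ tsupport f :=
  tsupport_fderiv_apply_subset ℝ _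

lemma smooth_diff {f : R4 → ℝ} (hf : ContDiff ℝ (⊤ : ℕ∞) f) : Differentiable ℝ f :=
  hf.differentiable (by simp)

lemma pd_mul {f g : R4 → ℝ} (hf : ContDiff ℝ (⊤ : ℕ∞) f) (hg : ContDiff ℝ (⊤ : ℕ∞) g)
    (i : Fin 4) (x : R4) : pd i (fun y => f y * g y) x = pd i f x * g x + f x * pd i g x := by
  unfold pd
  rw [fderiv_fun_mul (smooth_diff hf x) (smooth_diff hg x)]
  simp
  ring

lemma pd_add {f g : R4 → ℝ} (hf : ContDiff ℝ (⊤ : ℕ∞) f) (hg : ContDiff ℝ (⊤ : ℕ∞) g)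
    (i : Fin 4) (x : R4) : pd i (fun y => f y + g y) x = pd i f x + pd i g x := by
  unfold pd
  rw [fderiv_fun_add (smooth_diff hf x) (smooth_diff hg x)]
  simp

/-- The second derivative as a bilinear form, expressed by iterated partial derivatives. -/
lemma pd_pd {f : R4 → ℝ} (hf : ContDiff ℝ (⊤ : ℕ∞) f) (i j : Fin 4) (x : R4) :
    pd i (pd j f) x =
      fderiv ℝ (fderiv ℝ f) x (EuclideanSpace.single i 1) (EuclideanSpace.single j 1) := by
  have h : DifferentiableAt ℝ (fderiv ℝ f) x :=
    (hf.fderiv_right (m := (⊤ : ℕ∞)) (by simp)).differentiable (by simp) x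
  unfold pd
  rw [fderiv_clm_apply h (differentiableAt_const _)]
  simp

lemma pd_comm {f : R4 → ℝ} (hf : ContDiff ℝ (⊤ : ℕ∞) f) (i j : Fin 4) :
    pd i (pd j f) = pd j (pd i f) := by
  ext x
  rw [pd_pd hf, pd_pd hf]
  exact (hf.contDiffAt.isSymmSndFDerivAt
    (by
      rw [minSmoothness_of_isRCLikeNormedField]
      exact WithTop.coe_le_coe.2 (le_top : (2 : ℕ∞) ≤ ⊤))).eq _ _

lemma lapl_eq {f : R4 → ℝ} (hf : ContDiff ℝ (⊤ : ℕ∞) f) (x : R4) :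
    lapl f x = ∑ i, pd i (pd i f) x := by
  unfold lapl
  refine Finset.sum_congr rfl fun i _ => ?_
  rw [iteratedFDeriv_two_apply, pd_pd hf]
  simp

lemma norm_sq_sum (x : R4) : ‖x‖ ^ 2 = ∑ i, (x i) ^ 2 := by
  rw [EuclideanSpace.norm_sq_eq]; simp

lemma gradient_sq (f : R4 → ℝ) (x : R4) : ‖gradient f x‖ ^ 2 = ∑ i, (pd i f x) ^ 2 := by
  rw [norm_sq_sum]
  refine Finset.sum_congr rfl fun i _ => ?_
  unfold pd
  rw [← inner_gradient_left, EuclideanSpace.inner_single_right]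
  simp

lemma supp_mul_left {f g : R4 → ℝ} (hf : HasCompactSupport f) :
    HasCompactSupport (fun x => f x * g x) := hf.mul_right

lemma ibp {f g : R4 → ℝ} (hf : ContDiff ℝ (⊤ : ℕ∞) f) (hg : ContDiff ℝ (⊤ : ℕ∞) g)
    (hc : HasCompactSupport f) (i : Fin 4) :
    ∫ x, f x * pd i g x = -∫ x, pd i f x * g x := by
  apply integral_mul_fderiv_eq_neg_fderiv_mul_of_integrable
  · exact ((pd_smooth hf i).continuous.mul hg.continuous).integrable_of_hasCompactSupport
      (supp_mul_left (pd_supp hc i))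
  · exact (hf.continuous.mul (pd_smooth hg i).continuous).integrable_of_hasCompactSupport
      (supp_mul_left hc)
  · exact (hf.continuous.mul hg.continuous).integrable_of_hasCompactSupport (supp_mul_left hc)
  · exact fun x _ => smooth_diff hf x
  · exact fun x _ => smooth_diff hg x

/-- Integrating by parts twice, the mixed second derivatives may be exchanged for pure ones. -/
lemma int_mixed {f : R4 → ℝ} (hf : ContDiff ℝ (⊤ : ℕ∞) f) (hc : HasCompactSupport f)
    (i j : Fin 4) :
    ∫ x, (pd i (pd j f) x) ^ 2 = ∫ x, pd i (pd i f) x * pd j (pd j f) x := by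
  have hi := pd_smooth hf i
  have hj := pd_smooth hf j
  have h1 := ibp (pd_smooth hj i) hj (pd_supp (pd_supp hc j) i) i
  have h2 := ibp (pd_smooth hi i) hj (pd_supp (pd_supp hc i) i) j
  have h3 : pd i (pd i (pd j f)) = pd j (pd i (pd i f)) := by
    rw [pd_comm hf i j, pd_comm hi i j]
  rw [h3] at h1
  rw [h2, ← h1]
  simp only [sq]

/-- For a compactly supported smooth function the full Hessian and the Laplacian have the same
`L²` norm. -/
lemma int_hess {f : R4 → ℝ} (hf : ContDiff ℝ (⊤ : ℕ∞) f) (hc : HasCompactSupport f) :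
    ∫ x, ∑ i, ∑ j, (pd j (pd i f) x) ^ 2 = ∫ x, (lapl f x) ^ 2 := by
  have e : ∀ x, (lapl f x) ^ 2 = ∑ i, ∑ j, pd j (pd j f) x * pd i (pd i f) x := by
    intro x
    rw [lapl_eq hf, sq, Finset.sum_mul_sum, Finset.sum_comm]
  simp only [e]
  have I1 : ∀ i j, Integrable (fun x => (pd j (pd i f) x) ^ 2) := fun i j => by
    simp only [sq]
    have h := pd_smooth (pd_smooth hf i) j
    exact (h.continuous.mul h.continuous).integrable_of_hasCompactSupport
      (supp_mul_left (pd_supp (pd_supp hc i) j))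
  have I2 : ∀ i j, Integrable (fun x => pd j (pd j f) x * pd i (pd i f) x) := fun i j =>
    ((pd_smooth (pd_smooth hf j) j).continuous.mul
      (pd_smooth (pd_smooth hf i) i).continuous).integrable_of_hasCompactSupport
      (supp_mul_left (pd_supp (pd_supp hc j) j))
  rw [integral_finsetSum _ fun i _ => integrable_finsetSum _ fun j _ => I1 i j,
    integral_finsetSum _ fun i _ => integrable_finsetSum _ fun j _ => I2 i j]
  refine Finset.sum_congr rfl fun i _ => ?_
  rw [integral_finsetSum _ fun j _ => I1 i j, integral_finsetSum _ fun j _ => I2 i j]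
  exact Finset.sum_congr rfl fun j _ => int_mixed hf hc j i

/-! ### Hardy's inequality with regularised weights -/

/-- The regularised power weight `(|x|² + ε)ˢ`, smooth on all of `ℝ⁴` when `ε > 0`. -/
def wt (ε s : ℝ) (x : R4) : ℝ := (‖x‖ ^ 2 + ε) ^ s

lemma base_pos {ε : ℝ} (hε : 0 < ε) (x : R4) : 0 < ‖x‖ ^ 2 + ε := by positivity

lemma wt_pos {ε : ℝ} (hε : 0 < ε) (s : ℝ) (x : R4) : 0 < wt ε s x :=
  Real.rpow_pos_of_pos (base_pos hε x) s

lemma wt_smooth {ε : ℝ} (hε : 0 < ε) (s : ℝ) : ContDiff ℝ (⊤ : ℕ∞) (wt ε s) := by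
  unfold wt
  exact ((contDiff_norm_sq ℝ).add contDiff_const).rpow_const_of_ne
    fun x => (base_pos hε x).ne'

lemma pd_wt {ε : ℝ} (hε : 0 < ε) (s : ℝ) (i : Fin 4) (x : R4) :
    pd i (wt ε s) x = 2 * s * x i * wt ε (s - 1) x := by
  have h1 : HasFDerivAt (fun y : R4 => ‖y‖ ^ 2 + ε) _ x :=
    ((hasFDerivAt_id x).norm_sq).add_const ε
  have h2 := h1.rpow_const (p := s) (Or.inl (base_pos hε x).ne')
  unfold pd wt
  rw [h2.fderiv]
  simp [EuclideanSpace.inner_single_right]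
  ring

lemma coord_smooth (i : Fin 4) : ContDiff ℝ (⊤ : ℕ∞) (fun x : R4 => x i) :=
  (EuclideanSpace.proj (𝕜 := ℝ) i : R4 →L[ℝ] ℝ).contDiff

lemma pd_coord (i : Fin 4) (x : R4) : pd i (fun x : R4 => x i) x = 1 := by
  unfold pd
  have : HasFDerivAt (fun x : R4 => x i) (EuclideanSpace.proj (𝕜 := ℝ) i : R4 →L[ℝ] ℝ) x :=
    (EuclideanSpace.proj (𝕜 := ℝ) i : R4 →L[ℝ] ℝ).hasFDerivAt
  rw [this.fderiv]
  simp

/-- Hardy's inequality with the regularised weight `(|x|² + ε)^(-β/2)`. It follows by testing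
`v²` against the vector field `x (|x|² + ε)^(-β/2)`, whose divergence is at least
`(4 - β) (|x|² + ε)^(-β/2)`. -/
lemma hardy {v : R4 → ℝ} (hv : ContDiff ℝ (⊤ : ℕ∞) v) (hc : HasCompactSupport v)
    {β ε : ℝ} (hβ0 : 0 ≤ β) (hβ4 : β < 4) (hε : 0 < ε) :
    ∫ x, (v x) ^ 2 * wt ε (-β / 2) x
      ≤ (2 / (4 - β)) ^ 2 * ∫ x, (∑ i, (pd i v x) ^ 2) * wt ε (1 - β / 2) x := by
  set F : Fin 4 → R4 → ℝ := fun i x => x i * wt ε (-β / 2) x with hF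
  have hFs : ∀ i, ContDiff ℝ (⊤ : ℕ∞) (F i) := fun i => (coord_smooth i).mul (wt_smooth hε _)
  have hpF : ∀ i x, pd i (F i) x = wt ε (-β / 2) x - β * (x i) ^ 2 * wt ε (-β / 2 - 1) x := by
    intro i x
    rw [hF, pd_mul (coord_smooth i) (wt_smooth hε _), pd_coord, pd_wt hε]
    ring
  have hv2 : ContDiff ℝ (⊤ : ℕ∞) (fun x => v x * v x) := hv.mul hv
  have hc2 : HasCompactSupport (fun x => v x * v x) := supp_mul_left hc
  have I1 : ∀ i, Integrable (fun x => v x * v x * pd i (F i) x) := fun i =>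
    (hv2.continuous.mul (pd_smooth (hFs i) i).continuous).integrable_of_hasCompactSupport
      (supp_mul_left hc2)
  have I2 : ∀ i, Integrable (fun x => pd i (fun x => v x * v x) x * F i x) := fun i =>
    ((pd_smooth hv2 i).continuous.mul (hFs i).continuous).integrable_of_hasCompactSupport
      (supp_mul_left (pd_supp hc2 i))
  have I3 : Integrable (fun x => (v x) ^ 2 * wt ε (-β / 2) x) := by
    simp only [sq]
    exact (hv2.continuous.mul (wt_smooth hε _).continuous).integrable_of_hasCompactSupport
      (supp_mul_left hc2)
  have I4 : Integrable (fun x => (∑ i, (pd i v x) ^ 2) * wt ε (1 - β / 2) x) := by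
    simp only [Finset.sum_mul, sq]
    exact integrable_finsetSum _ fun i _ =>
      (((pd_smooth hv i).continuous.mul (pd_smooth hv i).continuous).mul
        (wt_smooth hε _).continuous).integrable_of_hasCompactSupport
        (supp_mul_left (supp_mul_left (pd_supp hc i)))
  have key : ∫ x, ∑ i, (v x * v x * pd i (F i) x + pd i (fun x => v x * v x) x * F i x) = 0 := by
    have I (i : Fin 4) : Integrable
        (fun x => v x * v x * pd i (F i) x + pd i (fun x => v x * v x) x * F i x) :=
      (I1 i).add (I2 i)
    rw [integral_finsetSum _ fun i _ => I i]
    refine Finset.sum_eq_zero fun i _ => ?_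
    rw [integral_add (I1 i) (I2 i), ibp hv2 (hFs i) hc2]
    ring
  have hδ : 0 < 4 - β := by linarith
  have mono : ∫ x, ((4 - β) / 2 * ((v x) ^ 2 * wt ε (-β / 2) x)
      - 2 / (4 - β) * ((∑ i, (pd i v x) ^ 2) * wt ε (1 - β / 2) x))
      ≤ ∫ x, ∑ i, (v x * v x * pd i (F i) x + pd i (fun x => v x * v x) x * F i x) := by
    refine integral_mono ((I3.const_mul _).sub (I4.const_mul _))
      (integrable_finsetSum _ fun i _ => (I1 i).add (I2 i)) fun x => ?_
    dsimp only
    have hw := wt_pos hε (-β / 2) x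
    have hw1 : (‖x‖ ^ 2 + ε) * wt ε (-β / 2 - 1) x = wt ε (-β / 2) x := by
      unfold wt
      rw [mul_comm, ← Real.rpow_add_one (base_pos hε x).ne']
      congr 1; ring
    have hw2 : (‖x‖ ^ 2 + ε) * wt ε (-β / 2) x = wt ε (1 - β / 2) x := by
      unfold wt
      rw [mul_comm, ← Real.rpow_add_one (base_pos hε x).ne']
      congr 1; ring
    have hw0 := wt_pos hε (-β / 2 - 1) x
    have e : ∑ i, (v x * v x * pd i (F i) x + pd i (fun x => v x * v x) x * F i x)
        = (v x) ^ 2 * (4 * wt ε (-β / 2) x - β * ‖x‖ ^ 2 * wt ε (-β / 2 - 1) x)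
          + 2 * v x * (∑ i, pd i v x * x i) * wt ε (-β / 2) x := by
      rw [norm_sq_sum]
      simp only [hpF, pd_mul hv hv, Fin.sum_univ_four]
      simp only [hF]
      ring
    rw [e, ← hw2]
    have cs : (∑ i, pd i v x * x i) ^ 2 ≤ (∑ i, (pd i v x) ^ 2) * ‖x‖ ^ 2 := by
      rw [norm_sq_sum]
      exact Finset.sum_mul_sq_le_sq_mul_sq _ _ _
    have hG : 0 ≤ ∑ i, (pd i v x) ^ 2 := Finset.sum_nonneg fun i _ => sq_nonneg _
    set s := ∑ i, pd i v x * x i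
    set G := ∑ i, (pd i v x) ^ 2
    set w := wt ε (-β / 2) x
    set w1 := wt ε (-β / 2 - 1) x
    have a1 : ‖x‖ ^ 2 * w1 ≤ w := by nlinarith
    have a2 : (4 - β) * w ≤ 4 * w - β * ‖x‖ ^ 2 * w1 := by nlinarith
    have a3 : (v x) ^ 2 * ((4 - β) * w) ≤ (v x) ^ 2 * (4 * w - β * ‖x‖ ^ 2 * w1) :=
      mul_le_mul_of_nonneg_left a2 (sq_nonneg _)
    have a4 : s ^ 2 ≤ G * (‖x‖ ^ 2 + ε) := by nlinarith
    -- Young's inequality with weight `(4 - β) / 2`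
    have a5 : 0 ≤ (4 - β) / 2 * (v x) ^ 2 + 2 * v x * s + 2 / (4 - β) * s ^ 2 := by
      have : (4 - β) / 2 * (v x) ^ 2 + 2 * v x * s + 2 / (4 - β) * s ^ 2
          = 2 / (4 - β) * ((4 - β) / 2 * v x + s) ^ 2 := by
        field_simp
        ring
      rw [this]; positivity
    have a6 : 2 / (4 - β) * s ^ 2 ≤ 2 / (4 - β) * (G * (‖x‖ ^ 2 + ε)) :=
      mul_le_mul_of_nonneg_left a4 (by positivity)
    have a7 : 0 ≤ ((4 - β) / 2 * (v x) ^ 2 + 2 * v x * s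
        + 2 / (4 - β) * (G * (‖x‖ ^ 2 + ε))) * w := mul_nonneg (by linarith) hw.le
    nlinarith
  rw [key, integral_sub (I3.const_mul _) (I4.const_mul _), integral_const_mul,
    integral_const_mul] at mono
  set A := ∫ x, (v x) ^ 2 * wt ε (-β / 2) x
  set B := ∫ x, (∑ i, (pd i v x) ^ 2) * wt ε (1 - β / 2) x
  have : (2 / (4 - β)) * ((4 - β) / 2 * A - 2 / (4 - β) * B) ≤ 0 :=
    mul_nonpos_of_nonneg_of_nonpos (by positivity) mono
  have e2 : (2 / (4 - β)) * ((4 - β) / 2 * A - 2 / (4 - β) * B)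
      = A - (2 / (4 - β)) ^ 2 * B := by
    field_simp
  linarith

lemma supp_of_ball {v : R4 → ℝ} (hs : tsupport v ⊆ Metric.closedBall 0 1) :
    HasCompactSupport v :=
  (isCompact_closedBall (0 : R4) 1).of_isClosed_subset (isClosed_tsupport v) hs

/-- Hardy's inequality applied to `v` and then to each partial derivative of `v` leaves a weight
with nonnegative exponent, which is bounded on the unit ball. -/
lemma hardy_twice {v : R4 → ℝ} (hv : ContDiff ℝ (⊤ : ℕ∞) v)
    (hs : tsupport v ⊆ Metric.closedBall 0 1) {β ε : ℝ} (hβ2 : 2 ≤ β) (hβ4 : β < 4)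
    (hε : 0 < ε) (hε1 : ε ≤ 1) :
    ∫ x, (v x) ^ 2 * wt ε (-β / 2) x
      ≤ (2 / (4 - β)) ^ 2 * ((2 / (6 - β)) ^ 2 * (2 * ∫ x, (lapl v x) ^ 2)) := by
  have hc := supp_of_ball hs
  refine (hardy hv hc (by linarith) hβ4 hε).trans ?_
  refine mul_le_mul_of_nonneg_left ?_ (by positivity)
  have sqint : ∀ {f : R4 → ℝ} (g : R4 → ℝ), ContDiff ℝ (⊤ : ℕ∞) f → HasCompactSupport f →
      Continuous g → Integrable (fun x => (f x) ^ 2 * g x) := by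
    intro f g hf hfc hg
    simp only [sq]
    exact ((hf.continuous.mul hf.continuous).mul hg).integrable_of_hasCompactSupport
      (supp_mul_left (supp_mul_left hfc))
  have hess : ∀ i j, ContDiff ℝ (⊤ : ℕ∞) (pd j (pd i v)) := fun i j =>
    pd_smooth (pd_smooth hv i) j
  have hessc : ∀ i j, HasCompactSupport (pd j (pd i v)) := fun i j => pd_supp (pd_supp hc i) j
  have hw : ∀ s, Continuous (wt ε s) := fun s => (wt_smooth hε s).continuous
  have I2 : ∀ i j, Integrable (fun x => (pd j (pd i v) x) ^ 2) := fun i j => by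
    simpa using sqint (fun _ => 1) (hess i j) (hessc i j) continuous_const
  simp only [Finset.sum_mul]
  rw [integral_finsetSum _ fun i _ => sqint _ (pd_smooth hv i) (pd_supp hc i) (hw _),
    ← int_hess hv hc,
    integral_finsetSum _ fun i _ => integrable_finsetSum _ fun j _ => I2 i j,
    Finset.mul_sum, Finset.mul_sum]
  refine Finset.sum_le_sum fun i _ => ?_
  have h := hardy (pd_smooth hv i) (pd_supp hc i) (β := β - 2) (by linarith) (by linarith) hε
  rw [show -(β - 2) / 2 = 1 - β / 2 by ring, show 4 - (β - 2) = 6 - β by ring] at h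
  refine h.trans (mul_le_mul_of_nonneg_left ?_ (by positivity))
  rw [← integral_const_mul]
  simp only [Finset.sum_mul, Finset.mul_sum]
  refine integral_mono
    (integrable_finsetSum _ fun j _ => sqint _ (hess i j) (hessc i j) (hw _))
    (integrable_finsetSum _ fun j _ => (I2 i j).const_mul 2) fun x => ?_
  refine Finset.sum_le_sum fun j _ => ?_
  by_cases hx : x ∈ Metric.closedBall (0 : R4) 1
  · have hx1 : ‖x‖ ≤ 1 := by simpa using hx
    have hb : ‖x‖ ^ 2 + ε ≤ 2 := by nlinarith [norm_nonneg x]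
    have : wt ε (1 - (β - 2) / 2) x ≤ 2 := by
      unfold wt
      calc (‖x‖ ^ 2 + ε) ^ (1 - (β - 2) / 2) ≤ (2 : ℝ) ^ (1 - (β - 2) / 2) :=
            Real.rpow_le_rpow (base_pos hε x).le hb (by linarith)
        _ ≤ (2 : ℝ) ^ (1 : ℝ) :=
            Real.rpow_le_rpow_of_exponent_le (by norm_num) (by linarith)
        _ = 2 := by simp
    nlinarith [sq_nonneg (pd j (pd i v) x)]
  · have : pd j (pd i v) x = 0 := image_eq_zero_of_notMem_tsupport fun h =>
      hx (hs (pd_tsupport _ i (pd_tsupport _ j h)))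
    simp [this]

/-! ### Cutoff and removal of the regularisation -/

lemma lapl_mul {f g : R4 → ℝ} (hf : ContDiff ℝ (⊤ : ℕ∞) f) (hg : ContDiff ℝ (⊤ : ℕ∞) g)
    (x : R4) : lapl (fun y => f y * g y) x
      = f x * lapl g x + 2 * (∑ i, pd i f x * pd i g x) + g x * lapl f x := by
  have h1 (i : Fin 4) : pd i (fun y => f y * g y)
      = fun y => pd i f y * g y + f y * pd i g y := funext (pd_mul hf hg i)
  rw [lapl_eq (hf.mul hg), lapl_eq hf, lapl_eq hg]
  simp only [h1, Finset.mul_sum, ← Finset.sum_add_distrib]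
  refine Finset.sum_congr rfl fun i _ => ?_
  rw [pd_add ((pd_smooth hf i).mul hg) (hf.mul (pd_smooth hg i)),
    pd_mul (pd_smooth hf i) hg, pd_mul hf (pd_smooth hg i)]
  ring

/-- Multiplication by a smooth cutoff: the Laplacian of `φ u` is controlled pointwise by the
`W^{2,2}` density of `u`. -/
lemma lapl_cutoff {φ : R4 → ℝ} (hφ : ContDiff ℝ (⊤ : ℕ∞) φ) (hc : HasCompactSupport φ) :
    ∃ M : ℝ, 0 < M ∧ ∀ u : R4 → ℝ, ContDiff ℝ (⊤ : ℕ∞) u → ∀ x,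
      (lapl (fun y => φ y * u y) x) ^ 2
        ≤ M * ((lapl u x) ^ 2 + ‖gradient u x‖ ^ 2 + (u x) ^ 2) := by
  have bd : ∀ f : R4 → ℝ, ContDiff ℝ (⊤ : ℕ∞) f → HasCompactSupport f →
      ∃ A : ℝ, 0 ≤ A ∧ ∀ x, (f x) ^ 2 ≤ A := by
    intro f hf hfc
    obtain ⟨A, hA⟩ := hfc.exists_bound_of_continuous hf.continuous
    refine ⟨A ^ 2, sq_nonneg _, fun x => ?_⟩
    have := hA x
    rw [Real.norm_eq_abs] at this
    exact sq_le_sq' (abs_le.1 this).1 (abs_le.1 this).2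
  obtain ⟨A, hA0, hA⟩ := bd φ hφ hc
  choose B hB0 hB using fun i => bd (pd i φ) (pd_smooth hφ i) (pd_supp hc i)
  choose E hE0 hE using
    fun i => bd (pd i (pd i φ)) (pd_smooth (pd_smooth hφ i) i) (pd_supp (pd_supp hc i) i)
  have hBs : 0 ≤ ∑ i, B i := Finset.sum_nonneg fun i _ => hB0 i
  have hEs : 0 ≤ ∑ i, E i := Finset.sum_nonneg fun i _ => hE0 i
  refine ⟨3 * A + 12 * (∑ i, B i) + 12 * (∑ i, E i) + 1, by positivity, fun u hu x => ?_⟩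
  rw [lapl_mul hφ hu, gradient_sq]
  have cs : (∑ i, pd i φ x * pd i u x) ^ 2 ≤ (∑ i, B i) * (∑ i, (pd i u x) ^ 2) :=
    (Finset.sum_mul_sq_le_sq_mul_sq _ _ _).trans
      (mul_le_mul_of_nonneg_right (Finset.sum_le_sum fun i _ => hB i x)
        (Finset.sum_nonneg fun i _ => sq_nonneg _))
  have hL : (lapl φ x) ^ 2 ≤ 4 * ∑ i, E i := by
    rw [lapl_eq hφ]
    have := sq_sum_le_card_mul_sum_sq (s := Finset.univ) (f := fun i => pd i (pd i φ) x)
    simp only [Finset.card_univ, Fintype.card_fin] at this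
    have h2 : ∑ i, (pd i (pd i φ) x) ^ 2 ≤ ∑ i, E i := Finset.sum_le_sum fun i _ => hE i x
    push_cast at this
    linarith
  have hG : 0 ≤ ∑ i, (pd i u x) ^ 2 := Finset.sum_nonneg fun i _ => sq_nonneg _
  have hA' := hA x
  set S := ∑ i, pd i φ x * pd i u x
  set G := ∑ i, (pd i u x) ^ 2
  set b := ∑ i, B i
  set e := ∑ i, E i
  have t1 : (φ x * lapl u x) ^ 2 ≤ A * (lapl u x) ^ 2 := by
    rw [mul_pow]; exact mul_le_mul_of_nonneg_right hA' (sq_nonneg _)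
  have t2 : (u x * lapl φ x) ^ 2 ≤ 4 * e * (u x) ^ 2 := by
    rw [mul_pow, mul_comm]; exact mul_le_mul_of_nonneg_right hL (sq_nonneg _)
  have t3 : (φ x * lapl u x + 2 * S + u x * lapl φ x) ^ 2
      ≤ 3 * ((φ x * lapl u x) ^ 2 + 4 * S ^ 2 + (u x * lapl φ x) ^ 2) := by
    nlinarith [sq_nonneg (φ x * lapl u x - 2 * S), sq_nonneg (φ x * lapl u x - u x * lapl φ x),
      sq_nonneg (2 * S - u x * lapl φ x)]
  have p1 : 0 ≤ (12 * b + 12 * e + 1) * (lapl u x) ^ 2 := by positivity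
  have p2 : 0 ≤ (3 * A + 12 * e + 1) * G := by positivity
  have p3 : 0 ≤ (3 * A + 12 * b + 1) * (u x) ^ 2 := by positivity
  nlinarith

/-- Removal of the regularisation `ε → 0` by Fatou's lemma. -/
lemma hardy_limit {v : R4 → ℝ} (hv : ContDiff ℝ (⊤ : ℕ∞) v)
    (hs : tsupport v ⊆ Metric.closedBall 0 1) {β : ℝ} (hβ2 : 2 ≤ β) (hβ4 : β < 4) :
    ∫⁻ x, ENNReal.ofReal ((v x) ^ 2 / ‖x‖ ^ β)
      ≤ ENNReal.ofReal ((2 / (4 - β)) ^ 2 * ((2 / (6 - β)) ^ 2 * 2)) *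
        ∫⁻ x, ENNReal.ofReal ((lapl v x) ^ 2) := by
  have hc := supp_of_ball hs
  set ε : ℕ → ℝ := fun n => 1 / ((n : ℝ) + 1) with hεdef
  have hε0 : ∀ n, 0 < ε n := fun n => Nat.one_div_pos_of_nat
  have hε1 : ∀ n, ε n ≤ 1 := fun n => by
    simp only [hεdef]
    rw [div_le_one (by positivity)]
    linarith [(Nat.cast_nonneg n : (0 : ℝ) ≤ n)]
  have hcont : ∀ n, Continuous (fun x => (v x) ^ 2 * wt (ε n) (-β / 2) x) := fun n =>
    (hv.continuous.pow 2).mul (wt_smooth (hε0 n) _).continuous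
  have hlap : Continuous (lapl v) := by
    rw [funext (lapl_eq hv)]
    exact continuous_finsetSum _ fun i _ => (pd_smooth (pd_smooth hv i) i).continuous
  have hlapc : Integrable (fun x => (lapl v x) ^ 2) := by
    have h0 : HasCompactSupport (lapl v) := by
      refine HasCompactSupport.intro (isCompact_closedBall (0 : R4) 1) fun x hx => ?_
      rw [lapl_eq hv]
      exact Finset.sum_eq_zero fun i _ => image_eq_zero_of_notMem_tsupport fun h =>
        hx (hs (pd_tsupport _ i (pd_tsupport _ i h)))
    simp only [sq]
    exact (hlap.mul hlap).integrable_of_hasCompactSupport (supp_mul_left h0)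
  calc ∫⁻ x, ENNReal.ofReal ((v x) ^ 2 / ‖x‖ ^ β)
      ≤ ∫⁻ x, liminf (fun n => ENNReal.ofReal ((v x) ^ 2 * wt (ε n) (-β / 2) x)) atTop := by
        refine lintegral_mono fun x => ?_
        rcases eq_or_ne x 0 with rfl | hx
        · simp [Real.zero_rpow (show β ≠ 0 by linarith)]
        · have hx0 : 0 < ‖x‖ := norm_pos_iff.2 hx
          have h1 : Tendsto (fun n => ‖x‖ ^ 2 + ε n) atTop (𝓝 (‖x‖ ^ 2 + 0)) :=
            tendsto_one_div_add_atTop_nhds_zero_nat.const_add _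
          rw [add_zero] at h1
          have h2 : Tendsto (fun n => wt (ε n) (-β / 2) x) atTop
              (𝓝 ((‖x‖ ^ 2) ^ (-β / 2))) :=
            h1.rpow_const (Or.inl (by positivity))
          have h3 := ENNReal.tendsto_ofReal (h2.const_mul ((v x) ^ 2))
          dsimp only
          rw [h3.liminf_eq]
          apply le_of_eq
          rw [← Real.rpow_natCast ‖x‖ 2, ← Real.rpow_mul hx0.le,
            show ((2 : ℕ) : ℝ) * (-β / 2) = -β by push_cast; ring, Real.rpow_neg hx0.le,
            div_eq_mul_inv]
    _ ≤ liminf (fun n => ∫⁻ x, ENNReal.ofReal ((v x) ^ 2 * wt (ε n) (-β / 2) x)) atTop :=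
        lintegral_liminf_le fun n => (hcont n).measurable.ennreal_ofReal
    _ ≤ liminf (fun _ : ℕ => ENNReal.ofReal ((2 / (4 - β)) ^ 2 * ((2 / (6 - β)) ^ 2 * 2)) *
          ∫⁻ x, ENNReal.ofReal ((lapl v x) ^ 2)) atTop := by
        refine liminf_le_liminf (Eventually.of_forall fun n => ?_)
        have hI : Integrable (fun x => (v x) ^ 2 * wt (ε n) (-β / 2) x) :=
          (hcont n).integrable_of_hasCompactSupport (by
            simp only [sq]; exact supp_mul_left (supp_mul_left hc))
        rw [← ofReal_integral_eq_lintegral_ofReal hI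
            (Eventually.of_forall fun x => mul_nonneg (sq_nonneg _) (wt_pos (hε0 n) _ x).le),
          ← ofReal_integral_eq_lintegral_ofReal hlapc
            (Eventually.of_forall fun x => sq_nonneg _),
          ← ENNReal.ofReal_mul (by positivity)]
        refine ENNReal.ofReal_le_ofReal ?_
        have := hardy_twice hv hs hβ2 hβ4 (hε0 n) (hε1 n)
        calc _ ≤ _ := this
          _ = _ := by ring
    _ = _ := liminf_const _

/-- The Hardy-type estimate: for `0 < β < 4` there is `C > 0` with
`∫ u²/|x|^β dx ≤ C ∫(|Δu|² + |∇u|² + u²) dx` for every smooth `u` of finite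
`W^{2,2}`-norm. -/
theorem stmt_6 (β : ℝ) (hβ0 : 0 < β) (hβ4 : β < 4) :
    ∃ C : ℝ, 0 < C ∧ ∀ u : R4 → ℝ, ContDiff ℝ (⊤ : ℕ∞) u →
      (∫⁻ x : R4,
        ENNReal.ofReal ((lapl u x) ^ 2 + ‖gradient u x‖ ^ 2 + (u x) ^ 2)) < ⊤ →
      (∫⁻ x : R4, ENNReal.ofReal ((u x) ^ 2 / ‖x‖ ^ β))
        ≤ ENNReal.ofReal C *
          ∫⁻ x : R4, ENNReal.ofReal ((lapl u x) ^ 2 + ‖gradient u x‖ ^ 2 + (u x) ^ 2) := by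
  -- on the unit ball the exponent may be raised, so it suffices to treat `γ ≥ 2`
  set γ : ℝ := max β 2 with hγ
  have hγ2 : 2 ≤ γ := le_max_right _ _
  have hγβ : β ≤ γ := le_max_left _ _
  have hγ4 : γ < 4 := max_lt hβ4 (by norm_num)
  let φ : ContDiffBump (0 : R4) := ⟨1 / 2, 1, by norm_num, by norm_num⟩
  have hφ : ContDiff ℝ (⊤ : ℕ∞) φ := φ.contDiff
  obtain ⟨M, hM, hbd⟩ := lapl_cutoff hφ φ.hasCompactSupport
  set K : ℝ := (2 / (4 - γ)) ^ 2 * ((2 / (6 - γ)) ^ 2 * 2)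
  have hK : 0 ≤ K := by positivity
  refine ⟨2 ^ β + K * M, by positivity, fun u hu _ => ?_⟩
  set R : R4 → ℝ := fun x => (lapl u x) ^ 2 + ‖gradient u x‖ ^ 2 + (u x) ^ 2 with hR
  set v : R4 → ℝ := fun x => φ x * u x with hvdef
  have hv : ContDiff ℝ (⊤ : ℕ∞) v := hφ.mul hu
  have hs : tsupport v ⊆ Metric.closedBall 0 1 :=
    (tsupport_mul_subset_left (f := φ) (g := u)).trans φ.tsupport_eq.subset
  have point : ∀ x, (u x) ^ 2 / ‖x‖ ^ β ≤ 2 ^ β * (u x) ^ 2 + (v x) ^ 2 / ‖x‖ ^ γ := by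
    intro x
    rcases eq_or_ne x 0 with rfl | hx
    · have h0 : ‖(0 : R4)‖ ^ β = 0 := by rw [norm_zero, Real.zero_rpow hβ0.ne']
      rw [h0, _root_.div_zero]
      positivity
    have hx0 : 0 < ‖x‖ := norm_pos_iff.2 hx
    rcases le_or_gt ‖x‖ (1 / 2) with h | h
    · have hvx : v x = u x := by
        have : φ x = 1 := φ.one_of_mem_closedBall (by simpa [φ] using h)
        simp [hvdef, this]
      rw [hvx]
      have h1 : ‖x‖ ^ γ ≤ ‖x‖ ^ β :=
        Real.rpow_le_rpow_of_exponent_ge hx0 (by linarith) hγβ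
      have h2 : (u x) ^ 2 / ‖x‖ ^ β ≤ (u x) ^ 2 / ‖x‖ ^ γ :=
        div_le_div_of_nonneg_left (sq_nonneg _) (Real.rpow_pos_of_pos hx0 _) h1
      have : 0 ≤ (2 : ℝ) ^ β * (u x) ^ 2 := by positivity
      linarith
    · have h1 : 1 ≤ 2 ^ β * ‖x‖ ^ β := by
        rw [← Real.mul_rpow (by norm_num) hx0.le]
        exact Real.one_le_rpow (by linarith) hβ0.le
      have h2 : (u x) ^ 2 / ‖x‖ ^ β ≤ 2 ^ β * (u x) ^ 2 := by
        rw [div_le_iff₀ (Real.rpow_pos_of_pos hx0 _)]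
        nlinarith [sq_nonneg (u x)]
      have : 0 ≤ (v x) ^ 2 / ‖x‖ ^ γ := by positivity
      linarith
  have hmeas : Measurable (fun x => ENNReal.ofReal (2 ^ β * (u x) ^ 2)) :=
    (continuous_const.mul (hu.continuous.pow 2)).measurable.ennreal_ofReal
  have b1 : ∫⁻ x, ENNReal.ofReal (2 ^ β * (u x) ^ 2)
      ≤ ENNReal.ofReal (2 ^ β) * ∫⁻ x, ENNReal.ofReal (R x) := by
    rw [← lintegral_const_mul' _ _ ENNReal.ofReal_ne_top]
    refine lintegral_mono fun x => ?_
    rw [ENNReal.ofReal_mul (by positivity)]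
    gcongr
    simp only [hR]
    have := sq_nonneg (lapl u x)
    have := sq_nonneg ‖gradient u x‖
    linarith
  have b2 : ∫⁻ x, ENNReal.ofReal ((lapl v x) ^ 2)
      ≤ ENNReal.ofReal M * ∫⁻ x, ENNReal.ofReal (R x) := by
    rw [← lintegral_const_mul' _ _ ENNReal.ofReal_ne_top]
    refine lintegral_mono fun x => ?_
    rw [← ENNReal.ofReal_mul hM.le]
    exact ENNReal.ofReal_le_ofReal (hbd u hu x)
  calc ∫⁻ x, ENNReal.ofReal ((u x) ^ 2 / ‖x‖ ^ β)
      ≤ ∫⁻ x, (ENNReal.ofReal (2 ^ β * (u x) ^ 2)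
          + ENNReal.ofReal ((v x) ^ 2 / ‖x‖ ^ γ)) := by
        refine lintegral_mono fun x => ?_
        rw [← ENNReal.ofReal_add (by positivity) (by positivity)]
        exact ENNReal.ofReal_le_ofReal (point x)
    _ = (∫⁻ x, ENNReal.ofReal (2 ^ β * (u x) ^ 2))
          + ∫⁻ x, ENNReal.ofReal ((v x) ^ 2 / ‖x‖ ^ γ) := lintegral_add_left hmeas _
    _ ≤ ENNReal.ofReal (2 ^ β) * (∫⁻ x, ENNReal.ofReal (R x))
          + ENNReal.ofReal K * (ENNReal.ofReal M * ∫⁻ x, ENNReal.ofReal (R x)) :=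
        add_le_add b1 ((hardy_limit hv hs hγ2 hγ4).trans (by gcongr))
    _ = _ := by
        rw [ENNReal.ofReal_add (by positivity) (by positivity), ENNReal.ofReal_mul hK, add_mul,
          mul_assoc]
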